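/- Let μ be a non-degenerate probability measure compactly supported on [−1,1], let v ≥ 2 be an integer, and let θ ≥ 0. Define H_{θ,B}(x) := θ x^v + Bx − γ(β(x)) for x ∈ cl(N) (with value −∞ where γ(β(x)) = ∞). Then there exists B₀ = B₀(θ, v) such that for every B > B₀, the function H_{θ,B} has a unique global maximizer on cl(N). -/

import Mathlib

/-!
Write `α` for the log-mgf, so that `α''(s)` is the variance `tiltVar μ s` of the tilted measure
`∝ e^{sx} dμ`. It is positive by non-degeneracy, so `s ↦ α'(s)` parametrizes `N`, and `H` becomes
`Hpar s = θ α'(s)^v + B α'(s) - γ(s)`, whose derivative is `α''(s) φ(s)` with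
`φ(s) = B + θ v α'(s)^(v-1) - s`.

Since `|α'| ≤ 1`, `φ > 0` for `s < B - θ v` and `φ ≤ 0` at `B + θ v`. The tilted measures
concentrate at the essential supremum of `μ`, so `α''(s) → 0` as `s → ∞` (`tiltVar_tendsto`);
hence `φ` is strictly decreasing beyond some `S`. If `B > S + θ v`, then `φ` changes sign exactly
once, at some `c` (`exists_crit`), and `Hpar` has its strict maximum there.

A point `x` of the closure outside `N` lies on one side of `N`. There `-log μ{x} ≥ s x - α(s)` for
every `s`, which gives `H(x) ≤ Hpar s` when `s` is far enough out on the corresponding side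
(`exists_HFn_le`), and therefore `H(x) < Hpar c`.
-/

open MeasureTheory Filter Set
open scoped ENNReal NNReal

noncomputable section

namespace GibbsMulti

/-- The log moment generating function `α(θ) = log ∫ e^{θx} dμ(x)`. -/
def cgf (μ : Measure ℝ) (θ : ℝ) : ℝ := Real.log (∫ x, Real.exp (θ * x) ∂μ)

/-- `α'`, the derivative of the log-mgf. -/
def cgf' (μ : Measure ℝ) : ℝ → ℝ := deriv (cgf μ)

/-- `N = α'(ℝ)`. -/
def Ndom (μ : Measure ℝ) : Set ℝ := Set.range (cgf' μ)

/-- `β`, the inverse of `α'` on `N`. -/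
def betaInv (μ : Measure ℝ) : ℝ → ℝ := Function.invFun (cgf' μ)

/-- `γ(θ) = θ α'(θ) − α(θ)`. -/
def gammaFn (μ : Measure ℝ) (θ : ℝ) : ℝ := θ * cgf' μ θ - cgf μ θ

open Classical in
/-- The extended function `γ∘β : cl(N) → [0,∞]`, with values `D(δ_t‖μ) = −log μ({t})`
at the endpoints of `N` (which is `∞` when `μ({t}) = 0`). -/
def gb (μ : Measure ℝ) (t : ℝ) : ℝ≥0∞ :=
  if t ∈ Ndom μ then ENNReal.ofReal (gammaFn μ (betaInv μ t))
  else if μ {t} = 0 then ⊤ else ENNReal.ofReal (- Real.log (μ {t}).toReal)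

/-- `μ` is non-degenerate. -/
def Nondeg (μ : Measure ℝ) : Prop := ∀ c : ℝ, μ ≠ Measure.dirac c

/-- Tail condition with (finite) exponent `p`: `E_μ[exp(λ |X|^p)] < ∞` for every `λ > 0`. -/
def TailCond (μ : Measure ℝ) (p : ℝ) : Prop :=
  ∀ l : ℝ, 0 < l → Integrable (fun x => Real.exp (l * |x| ^ p)) μ

/-- `μ` is stochastically non-negative. -/
def StochNonneg (μ : Measure ℝ) : Prop :=
  ∀ t : ℝ, 0 < t → -t ∈ Ndom μ →
    t ∈ Ndom μ ∧ gammaFn μ (betaInv μ t) ≤ gammaFn μ (betaInv μ (-t))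

/-- `H_{θ,B}(x) = θ x^v + Bx − γ(β(x))`, with value `−∞` where `γ(β(x)) = ∞`. -/
def HFn (μ : Measure ℝ) (v : ℕ) (θ B : ℝ) (x : ℝ) : EReal :=
  ((θ * x ^ v + B * x : ℝ) : EReal) - ((gb μ x : ℝ≥0∞) : EReal)

/-! ### Analytic properties of the log-mgf -/

section LogMgf

variable {μ : Measure ℝ} [IsProbabilityMeasure μ]

lemma cgf_eq (μ : Measure ℝ) : cgf μ = ProbabilityTheory.cgf id μ := by
  funext s
  simp [cgf, ProbabilityTheory.cgf, ProbabilityTheory.mgf]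

lemma integrable_exp (hsupp : ∀ᵐ x ∂μ, x ∈ Icc (-1 : ℝ) 1) (s : ℝ) :
    Integrable (fun x => Real.exp (s * x)) μ :=
  ProbabilityTheory.integrable_exp_mul_of_mem_Icc (X := id) aemeasurable_id hsupp

lemma mem_interior (hsupp : ∀ᵐ x ∂μ, x ∈ Icc (-1 : ℝ) 1) (s : ℝ) :
    s ∈ interior (ProbabilityTheory.integrableExpSet id μ) := by
  have h : ProbabilityTheory.integrableExpSet id μ = univ :=
    eq_univ_of_forall fun t => integrable_exp hsupp t
  simp [h]

lemma mgf_pos (hsupp : ∀ᵐ x ∂μ, x ∈ Icc (-1 : ℝ) 1) (s : ℝ) :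
    0 < ∫ x, Real.exp (s * x) ∂μ :=
  integral_exp_pos (integrable_exp hsupp s)

lemma hasDerivAt_cgf (hsupp : ∀ᵐ x ∂μ, x ∈ Icc (-1 : ℝ) 1) (s : ℝ) :
    HasDerivAt (cgf μ) (cgf' μ s) s := by
  rw [cgf', cgf_eq]
  exact (ProbabilityTheory.analyticAt_cgf (mem_interior hsupp s)).differentiableAt.hasDerivAt

/-- The variance of the exponentially tilted measure with density proportional to `e^{sx}`;
it is the second derivative of the log-mgf. -/
def tiltVar (μ : Measure ℝ) (s : ℝ) : ℝ :=
  ProbabilityTheory.variance id (μ.tilted (fun x => s * x))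

lemma hasDerivAt_cgf' (hsupp : ∀ᵐ x ∂μ, x ∈ Icc (-1 : ℝ) 1) (s : ℝ) :
    HasDerivAt (cgf' μ) (tiltVar μ s) s := by
  have h := ProbabilityTheory.variance_tilted_mul (mem_interior hsupp s)
  rw [iteratedDeriv_succ, iteratedDeriv_one] at h
  have h2 : tiltVar μ s = deriv (cgf' μ) s := by rw [cgf', cgf_eq]; exact h
  rw [h2]
  refine DifferentiableAt.hasDerivAt ?_
  rw [cgf', cgf_eq]
  exact (ProbabilityTheory.analyticAt_cgf (mem_interior hsupp s)).deriv.differentiableAt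

lemma abs_cgf'_le (hsupp : ∀ᵐ x ∂μ, x ∈ Icc (-1 : ℝ) 1) (s : ℝ) : |cgf' μ s| ≤ 1 := by
  have hZ := mgf_pos hsupp s
  have h : cgf' μ s = (∫ x, x * Real.exp (s * x) ∂μ) / ∫ x, Real.exp (s * x) ∂μ := by
    rw [cgf', cgf_eq, ProbabilityTheory.deriv_cgf (mem_interior hsupp s)]
    simp [ProbabilityTheory.mgf]
  rw [h, abs_div, abs_of_pos hZ, div_le_one hZ, ← Real.norm_eq_abs]
  refine norm_integral_le_of_norm_le (integrable_exp hsupp s) ?_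
  filter_upwards [hsupp] with x hx
  rw [norm_mul, Real.norm_eq_abs, Real.norm_eq_abs, Real.abs_exp]
  exact mul_le_of_le_one_left (Real.exp_pos _).le (abs_le.2 hx)

lemma isProbabilityMeasure_tilt (hsupp : ∀ᵐ x ∂μ, x ∈ Icc (-1 : ℝ) 1) (s : ℝ) :
    IsProbabilityMeasure (μ.tilted (fun x => s * x)) :=
  isProbabilityMeasure_tilted (integrable_exp hsupp s)

lemma tiltVar_pos (hND : Nondeg μ) (hsupp : ∀ᵐ x ∂μ, x ∈ Icc (-1 : ℝ) 1) (s : ℝ) :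
    0 < tiltVar μ s := by
  have := isProbabilityMeasure_tilt hsupp s
  refine lt_of_le_of_ne (ProbabilityTheory.variance_nonneg _ _) fun h => ?_
  have hL : MemLp id 2 (μ.tilted (fun x => s * x)) :=
    ProbabilityTheory.memLp_tilted_mul (mem_interior hsupp s) 2
  have he : ProbabilityTheory.evariance id (μ.tilted (fun x => s * x)) = 0 := by
    rw [← ProbabilityTheory.ofReal_variance hL]
    simp only [tiltVar] at h
    rw [← h, ENNReal.ofReal_zero]
  rw [ProbabilityTheory.evariance_eq_zero_iff aemeasurable_id] at he
  have hae := (absolutelyContinuous_tilted (integrable_exp hsupp s)).ae_eq he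
  set c := ∫ x, id x ∂(μ.tilted (fun x => s * x))
  refine hND c ?_
  have h1 : μ.map id = μ.map (fun _ => c) := Measure.map_congr hae
  simpa using h1

/-- The tilted measures concentrate at the essential supremum `b` of `μ` as `s → ∞`: the mass
of `{x ≤ b - ε}` is compared with that of `{x > b - ε/2}`. Hence their variance tends to `0`. -/
lemma tiltVar_tendsto (hsupp : ∀ᵐ x ∂μ, x ∈ Icc (-1 : ℝ) 1) :
    Tendsto (tiltVar μ) atTop (nhds 0) := by
  set b := essSup (id : ℝ → ℝ) μ with hb
  have hbd : IsBoundedUnder (· ≤ ·) (ae μ) (id : ℝ → ℝ) :=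
    ⟨1, by simpa using hsupp.mono fun x hx => hx.2⟩
  have hcobd : IsCoboundedUnder (· ≤ ·) (ae μ) (id : ℝ → ℝ) := by
    refine IsBoundedUnder.isCoboundedUnder_le ⟨-1, ?_⟩
    simpa using hsupp.mono fun x hx => hx.1
  have hle : ∀ᵐ x ∂μ, x ≤ b := ae_le_essSup hbd
  have hfreq : ∀ c < b, ∃ᶠ x in ae μ, c < x := fun c hc =>
    frequently_lt_of_lt_limsup hcobd hc
  have hb1 : b ≤ 1 := by
    by_contra hc
    obtain ⟨x, hx, hx'⟩ := ((hfreq 1 (not_le.1 hc)).and_eventually hsupp).exists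
    exact absurd hx (not_lt.2 hx'.2)
  have key : ∀ ε > 0, ∃ m > 0, ∀ s ≥ 0,
      tiltVar μ s ≤ ε ^ 2 + 4 / m * Real.exp (-(ε / 2 * s)) := by
    intro ε hε
    set T : Set ℝ := Ioi (b - ε / 2)
    have hT : μ T ≠ 0 := by
      have := hfreq (b - ε / 2) (by linarith)
      rw [frequently_ae_iff] at this
      exact this
    refine ⟨μ.real T, ENNReal.toReal_pos hT (measure_ne_top _ _), fun s hs => ?_⟩
    have hm : 0 < μ.real T := ENNReal.toReal_pos hT (measure_ne_top _ _)
    have := isProbabilityMeasure_tilt hsupp s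
    have hZ := mgf_pos hsupp s
    have hint := integrable_exp hsupp s
    have hZ_ge : Real.exp (s * (b - ε / 2)) * μ.real T ≤ ∫ x, Real.exp (s * x) ∂μ := by
      calc Real.exp (s * (b - ε / 2)) * μ.real T
          = ∫ _ in T, Real.exp (s * (b - ε / 2)) ∂μ := by
            rw [setIntegral_const, smul_eq_mul, mul_comm]
        _ ≤ ∫ x in T, Real.exp (s * x) ∂μ := by
            refine setIntegral_mono_on (integrable_const _).integrableOn hint.integrableOn
              measurableSet_Ioi fun x hx => ?_
            exact Real.exp_le_exp.2 (mul_le_mul_of_nonneg_left (le_of_lt hx) hs)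
        _ ≤ ∫ x, Real.exp (s * x) ∂μ :=
            setIntegral_le_integral hint (ae_of_all _ fun x => (Real.exp_pos _).le)
    have hnum : ∫ x, Real.exp (s * x) * (x - b) ^ 2 ∂μ
        ≤ ε ^ 2 * ∫ x, Real.exp (s * x) ∂μ + 4 * Real.exp (s * (b - ε)) := by
      have hr : ∫ x, (ε ^ 2 * Real.exp (s * x) + 4 * Real.exp (s * (b - ε))) ∂μ
          = ε ^ 2 * ∫ x, Real.exp (s * x) ∂μ + 4 * Real.exp (s * (b - ε)) := by
        rw [integral_add (hint.const_mul _) (integrable_const _), integral_const_mul]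
        simp
      rw [← hr]
      refine integral_mono_of_nonneg (ae_of_all _ fun x => by positivity)
        ((hint.const_mul _).add (integrable_const _)) ?_
      filter_upwards [hsupp, hle] with x hx hxb
      have hp := Real.exp_pos (s * x)
      have hq := Real.exp_pos (s * (b - ε))
      have hx1 := hx.1
      rcases le_total x (b - ε) with h | h
      · have h1 : Real.exp (s * x) ≤ Real.exp (s * (b - ε)) :=
          Real.exp_le_exp.2 (mul_le_mul_of_nonneg_left h hs)
        have h2 : (x - b) ^ 2 ≤ 4 := by nlinarith
        have h3 := mul_le_mul h1 h2 (sq_nonneg _) hq.le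
        have h4 : 0 ≤ ε ^ 2 * Real.exp (s * x) := by positivity
        show Real.exp (s * x) * (x - b) ^ 2 ≤ _
        linarith
      · have h2 : (x - b) ^ 2 ≤ ε ^ 2 := by nlinarith
        have h3 := mul_le_mul_of_nonneg_left h2 hp.le
        show Real.exp (s * x) * (x - b) ^ 2 ≤ _
        linarith
    have hvar : tiltVar μ s
        ≤ (∫ x, Real.exp (s * x) * (x - b) ^ 2 ∂μ) / ∫ x, Real.exp (s * x) ∂μ := by
      rw [tiltVar, ← ProbabilityTheory.variance_sub_const aestronglyMeasurable_id b]
      refine (ProbabilityTheory.variance_le_expectation_sq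
        (by fun_prop)).trans (le_of_eq ?_)
      rw [integral_tilted, ← integral_div]
      refine integral_congr_ae (ae_of_all _ fun x => ?_)
      simp only [smul_eq_mul, Pi.pow_apply, id]
      ring
    refine hvar.trans ?_
    rw [div_le_iff₀ hZ]
    refine hnum.trans ?_
    have he : Real.exp (s * (b - ε))
        = Real.exp (-(ε / 2 * s)) * Real.exp (s * (b - ε / 2)) := by
      rw [← Real.exp_add]; congr 1; ring
    have h5 : 4 * Real.exp (s * (b - ε)) = 4 / μ.real T * Real.exp (-(ε / 2 * s))
        * (Real.exp (s * (b - ε / 2)) * μ.real T) := by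
      rw [he]; field_simp
    rw [h5, add_mul]
    gcongr
  rw [Metric.tendsto_atTop]
  intro δ hδ
  have hε : 0 < Real.sqrt (δ / 2) := Real.sqrt_pos.2 (by linarith)
  obtain ⟨m, hm, hmb⟩ := key _ hε
  have hlim : Tendsto (fun s => 4 / m * Real.exp (-(Real.sqrt (δ / 2) / 2 * s)))
      atTop (nhds (4 / m * 0)) := by
    refine Tendsto.const_mul _ (Real.tendsto_exp_neg_atTop_nhds_zero.comp ?_)
    exact tendsto_id.const_mul_atTop (by positivity)
  rw [mul_zero] at hlim
  obtain ⟨S, hS⟩ := eventually_atTop.1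
    ((hlim.eventually (gt_mem_nhds (show 0 < δ / 2 by linarith))).and (eventually_ge_atTop 0))
  refine ⟨S, fun s hs => ?_⟩
  have h1 := hmb s (hS s hs).2
  have h2 := (hS s hs).1
  have h0 : 0 ≤ tiltVar μ s := ProbabilityTheory.variance_nonneg _ _
  rw [Real.sq_sqrt (by linarith)] at h1
  rw [Real.dist_eq, sub_zero, abs_of_nonneg h0]
  linarith

end LogMgf

/-! ### The rate function on `N` and at its endpoints -/

/-- A function whose derivative has the sign of `φ`, positive before `c` and negative after `c`,
has its strict global maximum at `c`. -/
lemma lt_of_unimodal {F A φ : ℝ → ℝ} {c : ℝ} (hF : ∀ s, HasDerivAt F (A s * φ s) s)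
    (hA : ∀ s, 0 < A s) (hpos : ∀ s < c, 0 < φ s) (hneg : ∀ s > c, φ s < 0) {s u : ℝ}
    (h : u < s ∧ s ≤ c ∨ c ≤ s ∧ s < u) : F u < F s := by
  have hcont : Continuous F := continuous_iff_continuousAt.2 fun s => (hF s).continuousAt
  rcases h with ⟨h1, h2⟩ | ⟨h1, h2⟩
  · have hm : StrictMonoOn F (Iic c) := by
      refine strictMonoOn_of_deriv_pos (convex_Iic c) hcont.continuousOn fun x hx => ?_
      rw [interior_Iic] at hx
      rw [(hF x).deriv]
      exact mul_pos (hA x) (hpos x hx)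
    exact hm (h1.le.trans h2) h2 h1
  · have hm : StrictAntiOn F (Ici c) := by
      refine strictAntiOn_of_deriv_neg (convex_Ici c) hcont.continuousOn fun x hx => ?_
      rw [interior_Ici] at hx
      rw [(hF x).deriv]
      exact mul_neg_of_pos_of_neg (hA x) (hneg x hx)
    exact hm h1 (h1.trans h2.le) h2

section Rate

variable {μ : Measure ℝ} [IsProbabilityMeasure μ]

lemma cgf'_strictMono (hND : Nondeg μ) (hsupp : ∀ᵐ x ∂μ, x ∈ Icc (-1 : ℝ) 1) :
    StrictMono (cgf' μ) :=
  strictMono_of_deriv_pos fun s => by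
    rw [(hasDerivAt_cgf' hsupp s).deriv]; exact tiltVar_pos hND hsupp s

lemma hasDerivAt_gammaFn (hsupp : ∀ᵐ x ∂μ, x ∈ Icc (-1 : ℝ) 1) (s : ℝ) :
    HasDerivAt (gammaFn μ) (tiltVar μ s * s) s := by
  have h := ((hasDerivAt_id s).mul (hasDerivAt_cgf' hsupp s)).sub (hasDerivAt_cgf hsupp s)
  refine h.congr_deriv ?_
  simp only [id]
  ring

lemma gammaFn_nonneg (hND : Nondeg μ) (hsupp : ∀ᵐ x ∂μ, x ∈ Icc (-1 : ℝ) 1) (s : ℝ) :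
    0 ≤ gammaFn μ s := by
  have h0 : gammaFn μ 0 = 0 := by simp [gammaFn, cgf]
  have hF : ∀ u, HasDerivAt (fun u => -gammaFn μ u) (tiltVar μ u * (-u)) u := fun u =>
    (hasDerivAt_gammaFn hsupp u).neg.congr_deriv (by ring)
  have key : s ≠ 0 → -gammaFn μ s < -gammaFn μ 0 := fun hs => by
    refine lt_of_unimodal (c := 0) hF (tiltVar_pos hND hsupp)
      (fun u hu => by linarith) (fun u hu => by linarith) ?_
    rcases lt_or_gt_of_ne hs with h | h
    · exact Or.inl ⟨h, le_rfl⟩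
    · exact Or.inr ⟨le_rfl, h⟩
  by_cases hs : s = 0
  · rw [hs, h0]
  · linarith [key hs]

/-- `H_{θ,B}` pulled back to `ℝ` along the parametrization `x = α'(s)` of `N`. -/
def Hpar (μ : Measure ℝ) (v : ℕ) (θ B s : ℝ) : ℝ :=
  θ * cgf' μ s ^ v + B * cgf' μ s - gammaFn μ s

lemma HFn_cgf' (hND : Nondeg μ) (hsupp : ∀ᵐ x ∂μ, x ∈ Icc (-1 : ℝ) 1) (v : ℕ) (θ B s : ℝ) :
    HFn μ v θ B (cgf' μ s) = (Hpar μ v θ B s : EReal) := by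
  have hinv : betaInv μ (cgf' μ s) = s :=
    Function.leftInverse_invFun (cgf'_strictMono hND hsupp).injective s
  have hgb : gb μ (cgf' μ s) = ENNReal.ofReal (gammaFn μ s) := by
    rw [gb, if_pos (show cgf' μ s ∈ Ndom μ from mem_range_self s), hinv]
  rw [HFn, hgb, EReal.coe_ennreal_ofReal, max_eq_left (gammaFn_nonneg hND hsupp s),
    ← EReal.coe_sub, Hpar]

/-- Derivative of `Hpar`, factored as variance times the critical-point function. -/
lemma hasDerivAt_Hpar (hsupp : ∀ᵐ x ∂μ, x ∈ Icc (-1 : ℝ) 1) (v : ℕ) (θ B s : ℝ) :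
    HasDerivAt (Hpar μ v θ B)
      (tiltVar μ s * (B + θ * v * cgf' μ s ^ (v - 1) - s)) s := by
  have h := ((((hasDerivAt_cgf' hsupp s).pow v).const_mul θ).add
    ((hasDerivAt_cgf' hsupp s).const_mul B)).sub (hasDerivAt_gammaFn hsupp s)
  exact h.congr_deriv (by ring)

/-- Chernoff bound for an atom: `D(δ_x‖μ) = -log μ{x}` dominates the Legendre transform. -/
lemma le_neg_log_atom (hsupp : ∀ᵐ x ∂μ, x ∈ Icc (-1 : ℝ) 1) {x : ℝ} (hx : μ {x} ≠ 0) (s : ℝ) :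
    s * x - cgf μ s ≤ -Real.log (μ {x}).toReal := by
  have hm : 0 < (μ {x}).toReal := ENNReal.toReal_pos hx (measure_ne_top _ _)
  have h : Real.exp (s * x) * (μ {x}).toReal ≤ ∫ y, Real.exp (s * y) ∂μ := by
    calc Real.exp (s * x) * (μ {x}).toReal
        = ∫ y in {x}, Real.exp (s * y) ∂μ := by
          rw [integral_singleton, smul_eq_mul, mul_comm, Measure.real]
      _ ≤ ∫ y, Real.exp (s * y) ∂μ :=
          setIntegral_le_integral (integrable_exp hsupp s)
            (ae_of_all _ fun y => (Real.exp_pos _).le)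
  have h2 := Real.log_le_log (by positivity) h
  rw [Real.log_mul (Real.exp_pos _).ne' hm.ne', Real.log_exp] at h2
  rw [cgf]
  linarith

/-- A value of `H` outside `N` is dominated by a value on `N` at a parameter `s ≠ c`. If `x` is an
atom, then `γ(β(x)) ≥ s x - α(s) = γ(s) + s (x - α'(s))`, while `θ x ^ v + B x` has slopes
between `B - θ v` and `B + θ v` on `[-1, 1]`, so any `s` far enough towards `+∞` (if `x` is above
`N`) or `-∞` (if `x` is below `N`) works. If `x` is not an atom, the value of `H` is `-∞`. -/
lemma exists_HFn_le (hsupp : ∀ᵐ x ∂μ, x ∈ Icc (-1 : ℝ) 1) (v : ℕ) {θ : ℝ} (hθ : 0 ≤ θ) (B : ℝ)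
    {x : ℝ} (hx : x ∉ Ndom μ) (hx1 : |x| ≤ 1) (c : ℝ) :
    ∃ s, s ≠ c ∧ HFn μ v θ B x ≤ (Hpar μ v θ B s : EReal) := by
  by_cases h0 : μ {x} = 0
  · refine ⟨c + 1, by linarith, ?_⟩
    simp [HFn, gb, if_neg hx, h0]
  have hcont : Continuous (cgf' μ) :=
    continuous_iff_continuousAt.2 fun s => (hasDerivAt_cgf' hsupp s).continuousAt
  have hlog : 0 ≤ -Real.log (μ {x}).toReal := by
    have : (μ {x}).toReal ≤ 1 := measureReal_le_one
    linarith [Real.log_nonpos ENNReal.toReal_nonneg this]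
  have hH : HFn μ v θ B x = ((θ * x ^ v + B * x - -Real.log (μ {x}).toReal : ℝ) : EReal) := by
    rw [HFn, gb, if_neg hx, if_neg h0, EReal.coe_ennreal_ofReal, max_eq_left hlog, EReal.coe_sub]
  have hlip : ∀ s, θ * (x ^ v - cgf' μ s ^ v) ≤ θ * v * |x - cgf' μ s| := fun s => by
    have h1 := abs_pow_sub_pow_le x (cgf' μ s) v
    have h2 : max |x| |cgf' μ s| ^ (v - 1) ≤ 1 :=
      pow_le_one₀ (le_max_of_le_left (abs_nonneg _)) (max_le hx1 (abs_cgf'_le hsupp s))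
    have h3 : |x - cgf' μ s| * v * max |x| |cgf' μ s| ^ (v - 1) ≤ |x - cgf' μ s| * v :=
      mul_le_of_le_one_right (by positivity) h2
    have h4 := mul_le_mul_of_nonneg_left ((le_abs_self _).trans (h1.trans h3)) hθ
    linarith
  have hbd : ∀ s, (θ * v * |x - cgf' μ s| + (B - s) * (x - cgf' μ s) ≤ 0) →
      HFn μ v θ B x ≤ (Hpar μ v θ B s : EReal) := fun s hs => by
    rw [hH, EReal.coe_le_coe_iff, Hpar, gammaFn]
    linarith [hlip s, le_neg_log_atom hsupp h0 s]
  have hside : (∀ s, cgf' μ s ≤ x) ∨ (∀ s, x ≤ cgf' μ s) := by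
    by_contra hcon
    push Not at hcon
    obtain ⟨⟨s, hs⟩, ⟨u, hu⟩⟩ := hcon
    exact hx (mem_range_of_exists_le_of_exists_ge hcont ⟨u, hu.le⟩ ⟨s, hs.le⟩)
  rcases hside with h | h
  · refine ⟨max (B + θ * v) (c + 1), ?_, hbd _ ?_⟩
    · exact ((lt_add_one c).trans_le (le_max_right _ _)).ne'
    · set s := max (B + θ * v) (c + 1)
      have hs : B + θ * v ≤ s := le_max_left _ _
      rw [abs_of_nonneg (sub_nonneg.2 (h s))]
      nlinarith [h s]
  · refine ⟨min (B - θ * v) (c - 1), ?_, hbd _ ?_⟩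
    · exact ((min_le_right _ _).trans_lt (sub_one_lt c)).ne
    · set s := min (B - θ * v) (c - 1)
      have hs : s ≤ B - θ * v := min_le_left _ _
      rw [abs_of_nonpos (sub_nonpos.2 (h s))]
      nlinarith [h s]

/-- For large `B` the critical-point function has exactly one sign change: it is positive left of
`B - θ v` because `|α'| ≤ 1`, and strictly decreasing to the right of that point because
`α''` is small there. -/
lemma exists_crit (hND : Nondeg μ) (hsupp : ∀ᵐ x ∂μ, x ∈ Icc (-1 : ℝ) 1) (v : ℕ) {θ : ℝ}
    (hθ : 0 ≤ θ) :
    ∃ B₀ : ℝ, ∀ B, B₀ < B → ∃ c,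
      (∀ s < c, 0 < B + θ * v * cgf' μ s ^ (v - 1) - s) ∧
      (∀ s > c, B + θ * v * cgf' μ s ^ (v - 1) - s < 0) := by
  have hθv : 0 ≤ θ * v := by positivity
  set K : ℝ := θ * v * (v - 1 : ℕ) with hK
  have hK0 : 0 ≤ K := by positivity
  have hlim : Tendsto (fun s => K * tiltVar μ s) atTop (nhds (K * 0)) :=
    (tiltVar_tendsto hsupp).const_mul K
  rw [mul_zero] at hlim
  obtain ⟨S, hS⟩ := eventually_atTop.1 (hlim.eventually (gt_mem_nhds one_pos))
  refine ⟨S + θ * v, fun B hB => ?_⟩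
  set φ : ℝ → ℝ := fun s => B + θ * v * cgf' μ s ^ (v - 1) - s with hφ
  have hpow : ∀ n s, |cgf' μ s ^ n| ≤ 1 := fun n s => by
    rw [abs_pow]; exact pow_le_one₀ (abs_nonneg _) (abs_cgf'_le hsupp s)
  have hder : ∀ s, HasDerivAt φ (K * tiltVar μ s * cgf' μ s ^ (v - 1 - 1) - 1) s := fun s => by
    have h := ((((hasDerivAt_cgf' hsupp s).pow (v - 1)).const_mul (θ * v)).const_add B).sub
      (hasDerivAt_id s)
    exact h.congr_deriv (by rw [hK]; ring)
  have hcont : Continuous φ := continuous_iff_continuousAt.2 fun s => (hder s).continuousAt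
  have hleft : ∀ s < B - θ * v, 0 < φ s := fun s hs => by
    have := (abs_le.1 (hpow (v - 1) s)).1
    simp only [hφ]
    nlinarith
  have hanti : StrictAntiOn φ (Ici S) := by
    refine strictAntiOn_of_deriv_neg (convex_Ici S) hcont.continuousOn fun x hx => ?_
    rw [interior_Ici] at hx
    rw [(hder x).deriv]
    have h1 := hS x (le_of_lt hx)
    have h2 : 0 ≤ K * tiltVar μ x := mul_nonneg hK0 (tiltVar_pos hND hsupp x).le
    have h3 := (abs_le.1 (hpow (v - 1 - 1) x)).2
    nlinarith
  have ha : 0 ≤ φ (B - θ * v) := by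
    have := (abs_le.1 (hpow (v - 1) (B - θ * v))).1
    simp only [hφ]
    nlinarith
  have hb : φ (B + θ * v) ≤ 0 := by
    have := (abs_le.1 (hpow (v - 1) (B + θ * v))).2
    simp only [hφ]
    nlinarith
  obtain ⟨c, hc, hc0⟩ := intermediate_value_Icc' (by linarith : B - θ * v ≤ B + θ * v)
    hcont.continuousOn ⟨hb, ha⟩
  have hcS : S ≤ c := by linarith [hc.1]
  refine ⟨c, fun s hs => ?_, fun s hs => ?_⟩
  · rcases lt_or_ge s (B - θ * v) with h | h
    · exact hleft s h
    · rw [← hc0]; exact hanti (mem_Ici.2 (by linarith)) hcS hs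
  · rw [← hc0]; exact hanti hcS (mem_Ici.2 (hcS.trans hs.le)) hs

end Rate

/-- for `μ` compactly supported on `[−1,1]` and `θ ≥ 0`, there is a
`B₀ = B₀(θ,v)` such that for every `B > B₀` the function `H_{θ,B}` has a unique global
maximizer on `cl(N)`. -/
theorem statement18
    (μ : Measure ℝ) [IsProbabilityMeasure μ] (hND : Nondeg μ)
    (hsupp : ∀ᵐ x ∂μ, x ∈ Icc (-1 : ℝ) 1)
    (v : ℕ) (hv : 2 ≤ v) (θ : ℝ) (hθ : 0 ≤ θ) :
    ∃ B₀ : ℝ, ∀ B : ℝ, B₀ < B →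
      ∃ t ∈ closure (Ndom μ),
        (∀ x ∈ closure (Ndom μ), HFn μ v θ B x ≤ HFn μ v θ B t) ∧
        ∀ x ∈ closure (Ndom μ),
          (∀ y ∈ closure (Ndom μ), HFn μ v θ B y ≤ HFn μ v θ B x) → x = t := by
  obtain ⟨B₀, hB₀⟩ := exists_crit hND hsupp v hθ
  refine ⟨B₀, fun B hB => ?_⟩
  obtain ⟨c, hpos, hneg⟩ := hB₀ B hB
  have hmax : ∀ s ≠ c, Hpar μ v θ B s < Hpar μ v θ B c := fun s hs => by
    refine lt_of_unimodal (hasDerivAt_Hpar hsupp v θ B) (tiltVar_pos hND hsupp) hpos hneg ?_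
    rcases lt_or_gt_of_ne hs with h | h
    · exact Or.inl ⟨h, le_rfl⟩
    · exact Or.inr ⟨le_rfl, h⟩
  have hlt : ∀ x ∈ closure (Ndom μ), x ≠ cgf' μ c →
      HFn μ v θ B x < HFn μ v θ B (cgf' μ c) := by
    intro x hx hne
    rw [HFn_cgf' hND hsupp]
    by_cases hxN : x ∈ Ndom μ
    · obtain ⟨s, rfl⟩ := hxN
      rw [HFn_cgf' hND hsupp, EReal.coe_lt_coe_iff]
      exact hmax s fun h => hne (by rw [h])
    · have hx1 : |x| ≤ 1 := by
        refine closure_minimal (t := {y : ℝ | |y| ≤ 1}) ?_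
          (isClosed_le continuous_abs continuous_const) hx
        rintro _ ⟨s, rfl⟩
        exact abs_cgf'_le hsupp s
      obtain ⟨s, hs, hle⟩ := exists_HFn_le hsupp v hθ B hxN hx1 c
      exact hle.trans_lt (EReal.coe_lt_coe_iff.2 (hmax s hs))
  refine ⟨cgf' μ c, subset_closure (mem_range_self c), fun x hx => ?_, fun x hx hxm => ?_⟩
  · by_cases hne : x = cgf' μ c
    · rw [hne]
    · exact (hlt x hx hne).le
  · by_contra hne
    exact absurd (hxm _ (subset_closure (mem_range_self c))) (not_le.2 (hlt x hx hne))

end GibbsMulti
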